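/- For every infinite binary sequence x ∈ B^ℕ, h̄(x) = 0 if and only if γ̄(x) = 0. -/

import Mathlib

open Filter Topology

/-- The factor of length `len` of the sequence `x` starting at position `i`. -/
def factor (x : ℕ → Bool) (i len : ℕ) : List Bool :=
  List.ofFn (fun j : Fin len => x (i + j))

/-- Number of (possibly overlapping) occurrences of the word `u`
in the prefix `x[0:n)` of the sequence `x`. -/
def occ (x : ℕ → Bool) (n : ℕ) (u : List Bool) : ℕ :=
  ((Finset.range (n + 1 - u.length)).filter (fun i => factor x i u.length = u)).card

/-- Non-aligned `ℓ`-block entropy of the prefix `x[0:n)`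
(logs are base 2, with the convention `0 · log 0 = 0`). -/
noncomputable def hBlock (ℓ : ℕ) (x : ℕ → Bool) (n : ℕ) : ℝ :=
  -(1 / (ℓ : ℝ)) * ∑ u : Fin ℓ → Bool,
    ((occ x n (List.ofFn u) : ℝ) / ((n : ℝ) - ℓ + 1)) *
      Real.logb 2 ((occ x n (List.ofFn u) : ℝ) / ((n : ℝ) - ℓ + 1))

/-- `h̲(x) = lim_{ℓ→∞} liminf_{n→∞} h_ℓ(x[0:n))` (the limit in `ℓ` exists). -/
noncomputable def hLow (x : ℕ → Bool) : ℝ :=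
  atTop.liminf fun ℓ => atTop.liminf fun n => hBlock ℓ x n

/-- `h̄(x) = lim_{ℓ→∞} limsup_{n→∞} h_ℓ(x[0:n))` (the limit in `ℓ` exists). -/
noncomputable def hUp (x : ℕ → Bool) : ℝ :=
  atTop.limsup fun ℓ => atTop.limsup fun n => hBlock ℓ x n

/-- `γ_ℓ(x[0:n))`: normalized minimal number of prediction errors when predicting
`x[i]` from the preceding `ℓ` symbols `x[i-ℓ:i)`, for `i ∈ {ℓ,…,n-1}`. -/
noncomputable def gammaWord (ℓ : ℕ) (x : ℕ → Bool) (n : ℕ) : ℝ :=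
  (1 / ((n : ℝ) - ℓ)) *
    ((Finset.univ : Finset ((Fin ℓ → Bool) → Bool)).inf' Finset.univ_nonempty
      (fun f => ((((Finset.Ico ℓ n).filter
        (fun i => x i ≠ f (fun j => x (i - ℓ + j)))).card : ℝ))))

/-- `β_ℓ(x[0:n))`: normalized minimal number of prediction errors when predicting
`x[i]` from the following `ℓ` symbols `x[i+1:i+ℓ+1)`, for `i ∈ {0,…,n-ℓ-1}`. -/
noncomputable def betaWord (ℓ : ℕ) (x : ℕ → Bool) (n : ℕ) : ℝ :=
  (1 / ((n : ℝ) - ℓ)) *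
    ((Finset.univ : Finset ((Fin ℓ → Bool) → Bool)).inf' Finset.univ_nonempty
      (fun f => ((((Finset.range (n - ℓ)).filter
        (fun i => x i ≠ f (fun j => x (i + 1 + j)))).card : ℝ))))

/-- `γ̲(x) = lim_{ℓ→∞} liminf_{n→∞} γ_ℓ(x[0:n))` (the limit in `ℓ` exists, by monotonicity). -/
noncomputable def gammaLow (x : ℕ → Bool) : ℝ :=
  atTop.liminf fun ℓ => atTop.liminf fun n => gammaWord ℓ x n

/-- `γ̄(x) = lim_{ℓ→∞} limsup_{n→∞} γ_ℓ(x[0:n))` (the limit in `ℓ` exists, by monotonicity). -/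
noncomputable def gammaUp (x : ℕ → Bool) : ℝ :=
  atTop.limsup fun ℓ => atTop.limsup fun n => gammaWord ℓ x n

/-- `β̲(x) = lim_{ℓ→∞} liminf_{n→∞} β_ℓ(x[0:n))` (the limit in `ℓ` exists, by monotonicity). -/
noncomputable def betaLow (x : ℕ → Bool) : ℝ :=
  atTop.liminf fun ℓ => atTop.liminf fun n => betaWord ℓ x n

/-- `β̄(x) = lim_{ℓ→∞} limsup_{n→∞} β_ℓ(x[0:n))` (the limit in `ℓ` exists, by monotonicity). -/
noncomputable def betaUp (x : ℕ → Bool) : ℝ :=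
  atTop.limsup fun ℓ => atTop.limsup fun n => betaWord ℓ x n

/-- Binary Shannon entropy function `H(α) = -α log α - (1-α) log (1-α)` (base-2 logs). -/
noncomputable def binEntropy (a : ℝ) : ℝ :=
  -(a * Real.logb 2 a) - (1 - a) * Real.logb 2 (1 - a)

/-- Conditional block entropy `Hc^{n,ℓ}(x)`:
`-Σ_{ā ∈ B^ℓ, a ∈ B, p(ā·a) > 0} p(ā·a) · log (p(ā·a)/p(ā))`, where
`p(ā) = occ(x[0:n-1), ā)/(n-ℓ)` and `p(ā·a) = occ(x[0:n), ā·a)/(n-ℓ)`. -/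
noncomputable def condEntropy (ℓ : ℕ) (x : ℕ → Bool) (n : ℕ) : ℝ :=
  -∑ u : Fin ℓ → Bool, ∑ a : Bool,
    (if 0 < ((occ x n (List.ofFn u ++ [a]) : ℝ) / ((n : ℝ) - ℓ)) then
      ((occ x n (List.ofFn u ++ [a]) : ℝ) / ((n : ℝ) - ℓ)) *
        Real.logb 2 (((occ x n (List.ofFn u ++ [a]) : ℝ) / ((n : ℝ) - ℓ)) /
          ((occ x (n - 1) (List.ofFn u) : ℝ) / ((n : ℝ) - ℓ)))
    else 0)

/-- The real number in `[0,1]` denoted by the binary sequence `x`. -/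
noncomputable def val (x : ℕ → Bool) : ℝ :=
  ∑' n : ℕ, (if x n then (1 : ℝ) else 0) / 2 ^ (n + 1)

/-!
Slide windows of length `k` over the first `N` starting positions of `x` and let `S k` be the
Shannon entropy of the empirical distribution of the windows. By the chain rule, `S (k + 1) - S k`
is the average over all windows `u` of the binary entropy of the symbol following `u`, and the best
predictor errs on `u` with the smaller of the two conditional frequencies. Since
`2 p ≤ H(p) / log 2` on `[0, 1/2]`, and by Jensen's inequality, this increment lies between
`2 log 2 * e` and `H(e)`, where `e` is the optimal error rate for contexts of length `k`.
Lengthening the context costs at most one boundary error, so telescoping gives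
`2 γ̄_ℓ ≤ h̄_ℓ` and bounds `h̄_ℓ` by the Cesàro means of `H(γ̄_k) / log 2`; letting `ℓ → ∞`,
`2 γ̄ ≤ h̄ ≤ H(γ̄) / log 2`.
-/

open scoped Finset

section Limsup

variable {ι : Type*} {F : Filter ι} {u v w : ι → ℝ} {a b : ℝ}

lemma const_mul_mem_Icc {c t : ℝ} (hc : 0 ≤ c) (ht : t ∈ Set.Icc a b) :
    c * t ∈ Set.Icc (c * a) (c * b) :=
  ⟨mul_le_mul_of_nonneg_left ht.1 hc, mul_le_mul_of_nonneg_left ht.2 hc⟩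

lemma isBoundedUnder_le_of_mem_Icc (hu : ∀ i, u i ∈ Set.Icc a b) : F.IsBoundedUnder (· ≤ ·) u :=
  isBoundedUnder_of ⟨b, fun i => (hu i).2⟩

lemma isBoundedUnder_ge_of_mem_Icc (hu : ∀ i, u i ∈ Set.Icc a b) : F.IsBoundedUnder (· ≥ ·) u :=
  isBoundedUnder_of ⟨a, fun i => (hu i).1⟩

variable [F.NeBot]

lemma isCoboundedUnder_le_of_mem_Icc (hu : ∀ i, u i ∈ Set.Icc a b) :
    F.IsCoboundedUnder (· ≤ ·) u :=
  (isBoundedUnder_ge_of_mem_Icc hu).isCoboundedUnder_le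

lemma limsup_mem_Icc (hu : ∀ i, u i ∈ Set.Icc a b) : F.limsup u ∈ Set.Icc a b :=
  ⟨le_limsup_of_frequently_le (Frequently.of_forall fun i => (hu i).1)
      (isBoundedUnder_le_of_mem_Icc hu),
    limsup_le_of_le (isCoboundedUnder_le_of_mem_Icc hu) (Eventually.of_forall fun i => (hu i).2)⟩

lemma limsup_le_limsup_add_limsup {a' b' a'' b'' : ℝ} (hu : ∀ i, u i ∈ Set.Icc a b)
    (hv : ∀ i, v i ∈ Set.Icc a' b') (hw : ∀ i, w i ∈ Set.Icc a'' b'')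
    (h : ∀ᶠ i in F, u i ≤ v i + w i) : F.limsup u ≤ F.limsup v + F.limsup w := by
  have hvw : ∀ i, (v + w) i ∈ Set.Icc (a' + a'') (b' + b'') := fun i =>
    ⟨add_le_add (hv i).1 (hw i).1, add_le_add (hv i).2 (hw i).2⟩
  calc F.limsup u
      ≤ F.limsup (v + w) :=
        limsup_le_limsup h (isCoboundedUnder_le_of_mem_Icc hu) (isBoundedUnder_le_of_mem_Icc hvw)
    _ ≤ F.limsup v + F.limsup w :=
        limsup_add_le (isBoundedUnder_ge_of_mem_Icc hv) (isBoundedUnder_le_of_mem_Icc hv)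
          (isCoboundedUnder_le_of_mem_Icc hw) (isBoundedUnder_le_of_mem_Icc hw)

lemma limsup_comp_of_monotoneOn_Icc {f : ℝ → ℝ} (hmono : MonotoneOn f (Set.Icc a b))
    (hcont : ContinuousOn f (Set.Icc a b)) (hu : ∀ i, u i ∈ Set.Icc a b) :
    F.limsup (fun i => f (u i)) = f (F.limsup u) := by
  have hlim : F.limsup u ∈ Set.Icc a b := limsup_mem_Icc hu
  have hab : a ≤ b := hlim.1.trans hlim.2
  let g := Set.IccExtend hab ((Set.Icc a b).domRestrict f)
  have hg : ∀ {t}, t ∈ Set.Icc a b → g t = f t := fun ht => Set.IccExtend_of_mem hab _ ht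
  have hg_mono : Monotone g := Monotone.IccExtend hab fun s t hst => hmono s.2 t.2 hst
  have hg_cont : Continuous g := hcont.domRestrict.Icc_extend'
  have hmap : g (F.limsup u) = F.limsup (g ∘ u) :=
    hg_mono.map_limsup_of_continuousAt u hg_cont.continuousAt
      (isBoundedUnder_le_of_mem_Icc hu) (isCoboundedUnder_le_of_mem_Icc hu)
  rw [← hg hlim, hmap]
  exact congrArg F.limsup (funext fun i => (hg (hu i)).symm)

lemma limsup_const_mul_of_mem_Icc {c : ℝ} (hc : 0 ≤ c) (hu : ∀ i, u i ∈ Set.Icc a b) :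
    F.limsup (fun i => c * u i) = c * F.limsup u :=
  limsup_comp_of_monotoneOn_Icc (monotone_id.const_mul hc |>.monotoneOn _) (by fun_prop) hu

end Limsup

section Min

variable {𝕜 : Type*} [Field 𝕜] [LinearOrder 𝕜] [IsStrictOrderedRing 𝕜]

lemma min_le_two_inv_mul_add (a b : 𝕜) : min a b ≤ 2⁻¹ * (a + b) := by
  linarith [min_add_max a b, min_le_max (a := a) (b := b)]

lemma min_div_add_mem_Icc {a b : 𝕜} (ha : 0 ≤ a) (hb : 0 ≤ b) :
    min a b / (a + b) ∈ Set.Icc (0 : 𝕜) 2⁻¹ :=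
  ⟨by positivity,
    div_le_of_le_mul₀ (by positivity) (by norm_num) (min_le_two_inv_mul_add a b)⟩

lemma add_mul_min_div_add {a b : 𝕜} (ha : 0 ≤ a) (hb : 0 ≤ b) :
    (a + b) * (min a b / (a + b)) = min a b := by
  refine mul_div_cancel_of_imp' fun h => ?_
  obtain ⟨rfl, rfl⟩ := (add_eq_zero_iff_of_nonneg ha hb).mp h
  exact min_self 0

end Min

section BinaryEntropy

lemma binEntropy_eq_real_binEntropy_div (p : ℝ) :
    binEntropy p = Real.binEntropy p / Real.log 2 := by
  simp only [binEntropy, Real.binEntropy_eq_negMulLog_add_negMulLog_one_sub, Real.negMulLog,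
    Real.logb]
  ring

lemma two_mul_log_two_mul_le_real_binEntropy {p : ℝ} (hp : p ∈ Set.Icc (0 : ℝ) 2⁻¹) :
    2 * Real.log 2 * p ≤ Real.binEntropy p := by
  have hconc := Real.strictConcave_binEntropy.concaveOn.2
    (by norm_num : (2⁻¹ : ℝ) ∈ Set.Icc 0 1) (by norm_num : (0 : ℝ) ∈ Set.Icc 0 1)
    (by linarith [hp.1] : 0 ≤ 2 * p) (by linarith [hp.2] : 0 ≤ 1 - 2 * p) (by ring)
  have hcomb : 2 * p * 2⁻¹ = p := by ring
  simp only [smul_eq_mul, Real.binEntropy_two_inv, Real.binEntropy_zero, mul_zero, add_zero,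
    hcomb] at hconc
  linarith

lemma negMulLog_add_negMulLog {a b : ℝ} (ha : 0 ≤ a) (hb : 0 ≤ b) :
    Real.negMulLog a + Real.negMulLog b =
      Real.negMulLog (a + b) + (a + b) * Real.binEntropy (min a b / (a + b)) := by
  wlog hab : a ≤ b generalizing a b
  · rw [min_comm, add_comm a b, add_comm (Real.negMulLog a)]
    exact this hb ha (le_of_not_ge hab)
  rcases (add_nonneg ha hb).eq_or_lt with h | hpos
  · obtain ⟨rfl, rfl⟩ := (add_eq_zero_iff_of_nonneg ha hb).mp h.symm
    simp
  have hsub : 1 - a / (a + b) = b / (a + b) := by field_simp; ring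
  have hsplit : ∀ t, Real.negMulLog t =
      t / (a + b) * Real.negMulLog (a + b) + (a + b) * Real.negMulLog (t / (a + b)) := fun t => by
    rw [← Real.negMulLog_mul, mul_div_cancel₀ _ hpos.ne']
  rw [min_eq_left hab, Real.binEntropy_eq_negMulLog_add_negMulLog_one_sub, hsub, hsplit a, hsplit b]
  field_simp
  ring

variable {ι : Type*} [Fintype ι] {a b : ι → ℝ}

lemma two_mul_log_two_mul_sum_min_le (ha : ∀ i, 0 ≤ a i) (hb : ∀ i, 0 ≤ b i) :
    2 * Real.log 2 * ∑ i, min (a i) (b i) ≤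
      ∑ i, (a i + b i) * Real.binEntropy (min (a i) (b i) / (a i + b i)) := by
  rw [Finset.mul_sum]
  refine Finset.sum_le_sum fun i _ => ?_
  calc 2 * Real.log 2 * min (a i) (b i)
      = (a i + b i) * (2 * Real.log 2 * (min (a i) (b i) / (a i + b i))) := by
        rw [mul_left_comm, add_mul_min_div_add (ha i) (hb i)]
    _ ≤ (a i + b i) * Real.binEntropy (min (a i) (b i) / (a i + b i)) :=
        mul_le_mul_of_nonneg_left
          (two_mul_log_two_mul_le_real_binEntropy (min_div_add_mem_Icc (ha i) (hb i)))
          (add_nonneg (ha i) (hb i))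

lemma sum_mul_binEntropy_le_binEntropy_sum_min (ha : ∀ i, 0 ≤ a i) (hb : ∀ i, 0 ≤ b i)
    (hab : ∑ i, (a i + b i) = 1) :
    ∑ i, (a i + b i) * Real.binEntropy (min (a i) (b i) / (a i + b i)) ≤
      Real.binEntropy (∑ i, min (a i) (b i)) := by
  have hmem : ∀ i ∈ Finset.univ, min (a i) (b i) / (a i + b i) ∈ Set.Icc (0 : ℝ) 1 := fun i _ =>
    Set.Icc_subset_Icc_right (by norm_num) (min_div_add_mem_Icc (ha i) (hb i))
  have hjensen := Real.strictConcave_binEntropy.concaveOn.le_map_sum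
    (fun i _ => add_nonneg (ha i) (hb i)) hab hmem
  simpa only [smul_eq_mul, add_mul_min_div_add (ha _) (hb _)] using hjensen

end BinaryEntropy

section Window

/-- The factor `x[i:i+k)`, as a function on `Fin k`. -/
def window (x : ℕ → Bool) (k i : ℕ) : Fin k → Bool := fun j => x (i + j)

/-- The word `u` followed by the symbol `b`. -/
def appendBit {k : ℕ} (u : Fin k → Bool) (b : Bool) : Fin (k + 1) → Bool :=
  Fin.snoc (α := fun _ => Bool) u b

/-- Number of starting positions `i < N` of occurrences of `u` in `x`. Fixing `N`, rather than the
length of the prefix read, makes the counts for different word lengths add up exactly. -/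
def windowCount (x : ℕ → Bool) (N : ℕ) {k : ℕ} (u : Fin k → Bool) : ℕ :=
  #{i ∈ Finset.range N | window x k i = u}

/-- Relative frequency of `u` among the windows of `x` starting at a position `i < N`
(the junk value for `N = 0` is `0`). -/
noncomputable def windowFreq (x : ℕ → Bool) (N : ℕ) {k : ℕ} (u : Fin k → Bool) : ℝ :=
  windowCount x N u / N

/-- Shannon entropy, in nats, of the empirical distribution of the windows of length `k` of `x`
starting at a position `i < N`. -/
noncomputable def windowEntropy (x : ℕ → Bool) (N k : ℕ) : ℝ :=
  ∑ u : Fin k → Bool, Real.negMulLog (windowFreq x N u)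

/-- Number of positions `i < N` at which `f` mispredicts the symbol following the window of
length `k` starting at `i`. -/
def predErrors (x : ℕ → Bool) (N : ℕ) {k : ℕ} (f : (Fin k → Bool) → Bool) : ℕ :=
  #{i ∈ Finset.range N | x (i + k) ≠ f (window x k i)}

/-- Least number of errors of a predictor with context length `k` on the windows of `x` starting
at a position `i < N`. -/
def minPredErrors (x : ℕ → Bool) (N k : ℕ) : ℕ :=
  (Finset.univ : Finset ((Fin k → Bool) → Bool)).inf' Finset.univ_nonempty (predErrors x N)

/-- Error rate of the best predictor with context length `k` on the windows of `x` starting at a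
position `i < N`; the finite-`N` counterpart of `γ_k`. -/
noncomputable def errorRate (x : ℕ → Bool) (N k : ℕ) : ℝ := minPredErrors x N k / N

variable {x : ℕ → Bool} {N k : ℕ}

lemma windowFreq_nonneg {u : Fin k → Bool} : 0 ≤ windowFreq x N u := by
  unfold windowFreq
  positivity

lemma sum_windowFreq (hN : N ≠ 0) : ∑ u : Fin k → Bool, windowFreq x N u = 1 := by
  have hcount : ∑ u : Fin k → Bool, windowCount x N u = N := by
    simp only [windowCount, ← Finset.card_eq_sum_card_fiberwise (f := window x k)
      (s := Finset.range N) (t := Finset.univ) (by simp), Finset.card_range]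
  simp only [windowFreq]
  rw [← Finset.sum_div, ← Nat.cast_sum, hcount, div_self (by exact_mod_cast hN)]

lemma window_succ_eq_appendBit_iff {i : ℕ} {u : Fin k → Bool} {b : Bool} :
    window x (k + 1) i = appendBit u b ↔
      window x k i = u ∧ x (i + k) = b := by
  have hlast : window x (k + 1) i = appendBit (window x k i) (x (i + k)) :=
    (Fin.snoc_init_self (window x (k + 1) i)).symm
  rw [hlast, appendBit, appendBit, Fin.snoc_inj]

lemma windowCount_appendBit (u : Fin k → Bool) (b : Bool) :
    windowCount x N (appendBit u b) =
      #{i ∈ Finset.range N | window x k i = u ∧ x (i + k) = b} := by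
  simp only [windowCount, window_succ_eq_appendBit_iff]

lemma windowFreq_eq_add (u : Fin k → Bool) :
    windowFreq x N u = windowFreq x N (appendBit u true) +
      windowFreq x N (appendBit u false) := by
  have hcount : windowCount x N u = windowCount x N (appendBit u true) +
      windowCount x N (appendBit u false) := by
    rw [windowCount_appendBit, windowCount_appendBit, windowCount, ← Finset.filter_filter,
      ← Finset.filter_filter,
      ← Finset.card_filter_add_card_filter_not (p := fun i => x (i + k) = true)]
    simp only [Bool.not_eq_true]
  rw [windowFreq, hcount, Nat.cast_add, add_div, windowFreq, windowFreq]

lemma sum_eq_sum_appendBit {M : Type*} [AddCommMonoid M] (g : (Fin (k + 1) → Bool) → M) :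
    ∑ w, g w = ∑ u : Fin k → Bool, (g (appendBit u true) +
      g (appendBit u false)) := by
  rw [← (Fin.snocEquiv fun _ : Fin (k + 1) => Bool).sum_comp, Fintype.sum_prod_type_right]
  simp only [Fintype.sum_bool]
  rfl

lemma predErrors_eq_sum (f : (Fin k → Bool) → Bool) :
    predErrors x N f = ∑ u, windowCount x N (appendBit u (!f u)) := by
  rw [predErrors, Finset.card_eq_sum_card_fiberwise (f := window x k) (t := Finset.univ) (by simp)]
  refine Finset.sum_congr rfl fun u _ => ?_
  rw [windowCount_appendBit, Finset.filter_filter]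
  congr 1
  refine Finset.filter_congr fun i _ => ?_
  rw [and_comm, and_congr_right_iff]
  rintro rfl
  exact Bool.eq_not.symm

lemma minPredErrors_le (f : (Fin k → Bool) → Bool) : minPredErrors x N k ≤ predErrors x N f :=
  Finset.inf'_le _ (Finset.mem_univ f)

lemma exists_predErrors_eq_minPredErrors (x : ℕ → Bool) (N k : ℕ) :
    ∃ f : (Fin k → Bool) → Bool, predErrors x N f = minPredErrors x N k := by
  obtain ⟨f, -, hf⟩ := Finset.exists_mem_eq_inf' Finset.univ_nonempty (predErrors x N (k := k))
  exact ⟨f, hf.symm⟩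

lemma minPredErrors_eq_sum_min (x : ℕ → Bool) (N k : ℕ) :
    minPredErrors x N k = ∑ u : Fin k → Bool,
      min (windowCount x N (appendBit u true))
        (windowCount x N (appendBit u false)) := by
  apply le_antisymm
  · let majority : (Fin k → Bool) → Bool := fun u =>
      decide (windowCount x N (appendBit u false) ≤
        windowCount x N (appendBit u true))
    refine (minPredErrors_le majority).trans ?_
    rw [predErrors_eq_sum]
    refine Finset.sum_le_sum fun u _ => ?_
    by_cases h : windowCount x N (appendBit u false) ≤ windowCount x N (appendBit u true)
    · simp [majority, h]
    · simp [majority, h, (lt_of_not_ge h).le]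
  · obtain ⟨f, hf⟩ := exists_predErrors_eq_minPredErrors x N k
    rw [← hf, predErrors_eq_sum]
    refine Finset.sum_le_sum fun u _ => ?_
    cases f u
    · exact min_le_left _ _
    · exact min_le_right _ _

lemma errorRate_eq_sum_min (x : ℕ → Bool) (N k : ℕ) :
    errorRate x N k = ∑ u : Fin k → Bool,
      min (windowFreq x N (appendBit u true))
        (windowFreq x N (appendBit u false)) := by
  simp only [errorRate, minPredErrors_eq_sum_min, Nat.cast_sum, Nat.cast_min, Finset.sum_div,
    windowFreq, min_div_div_right (Nat.cast_nonneg (α := ℝ) N)]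

-- Dropping the first symbol of the context turns the errors at `i < N` into errors at `i + 1 ≤ N`.
lemma minPredErrors_succ_le (x : ℕ → Bool) (N k : ℕ) :
    minPredErrors x N (k + 1) ≤ minPredErrors x N k + 1 := by
  obtain ⟨f, hf⟩ := exists_predErrors_eq_minPredErrors x N k
  have hwindow : ∀ i, Fin.tail (window x (k + 1) i) = window x k (i + 1) := fun i => by
    funext j
    simp only [Fin.tail, window, Fin.val_succ]
    congr 1
    omega
  calc minPredErrors x N (k + 1)
      ≤ predErrors x N (k := k + 1) (fun u => f (Fin.tail u)) := minPredErrors_le _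
    _ = #{i ∈ Finset.range N | x (i + 1 + k) ≠ f (window x k (i + 1))} := by
        simp only [predErrors, hwindow, add_right_comm _ 1 k, add_assoc]
    _ ≤ predErrors x (N + 1) f :=
        Finset.card_le_card_of_injOn (· + 1) (fun i hi => by simpa [predErrors] using hi)
          (add_left_injective 1).injOn
    _ ≤ predErrors x N f + 1 := by
        rw [predErrors, predErrors, Finset.range_add_one, Finset.filter_insert]
        split_ifs
        · exact Finset.card_insert_le _ _
        · exact Nat.le_succ _
    _ = minPredErrors x N k + 1 := by rw [hf]

lemma errorRate_add_le (x : ℕ → Bool) (N k m : ℕ) :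
    errorRate x N (k + m) ≤ errorRate x N k + m / N := by
  have hcount : minPredErrors x N (k + m) ≤ minPredErrors x N k + m := by
    induction m with
    | zero => rfl
    | succ m ih => exact (minPredErrors_succ_le x N (k + m)).trans (by omega)
  rw [errorRate, errorRate, ← add_div]
  gcongr
  exact_mod_cast hcount

lemma errorRate_mem_Icc (x : ℕ → Bool) (N k : ℕ) : errorRate x N k ∈ Set.Icc (0 : ℝ) 2⁻¹ := by
  rcases eq_or_ne N 0 with rfl | hN
  · simp [errorRate]
  rw [errorRate_eq_sum_min]
  refine ⟨Finset.sum_nonneg fun u _ => le_min windowFreq_nonneg windowFreq_nonneg, ?_⟩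
  calc ∑ u : Fin k → Bool, min (windowFreq x N (appendBit u true))
          (windowFreq x N (appendBit u false))
      ≤ ∑ u : Fin k → Bool, 2⁻¹ * windowFreq x N u := by
        simp only [windowFreq_eq_add (k := k)]
        exact Finset.sum_le_sum fun u _ => min_le_two_inv_mul_add _ _
    _ = 2⁻¹ := by rw [← Finset.mul_sum, sum_windowFreq hN, mul_one]

lemma windowEntropy_zero (x : ℕ → Bool) (N : ℕ) : windowEntropy x N 0 = 0 := by
  rcases eq_or_ne N 0 with rfl | hN
  · simp [windowEntropy, windowFreq]
  have hone := sum_windowFreq (x := x) (k := 0) hN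
  rw [Fintype.sum_unique] at hone
  rw [windowEntropy, Fintype.sum_unique, hone, Real.negMulLog_one]

lemma windowEntropy_mem_Icc (x : ℕ → Bool) (N k : ℕ) :
    windowEntropy x N k ∈ Set.Icc (0 : ℝ) (2 ^ k) := by
  have hfreq_le (u : Fin k → Bool) : windowFreq x N u ≤ 1 :=
    div_le_one_of_le₀ (by exact_mod_cast (Finset.card_filter_le _ _).trans_eq (Finset.card_range N))
      N.cast_nonneg
  refine ⟨Finset.sum_nonneg fun u _ => Real.negMulLog_nonneg windowFreq_nonneg (hfreq_le u), ?_⟩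
  calc windowEntropy x N k
      ≤ ∑ _u : Fin k → Bool, (1 : ℝ) := Finset.sum_le_sum fun u _ =>
        (Real.negMulLog_le_one_sub_self windowFreq_nonneg).trans
          (sub_le_self 1 windowFreq_nonneg)
    _ = 2 ^ k := by simp

lemma windowEntropy_succ (x : ℕ → Bool) (N k : ℕ) :
    windowEntropy x N (k + 1) = windowEntropy x N k + ∑ u : Fin k → Bool,
      (windowFreq x N (appendBit u true) +
        windowFreq x N (appendBit u false)) *
      Real.binEntropy (min (windowFreq x N (appendBit u true))
          (windowFreq x N (appendBit u false)) /
        (windowFreq x N (appendBit u true) +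
          windowFreq x N (appendBit u false))) := by
  simp only [windowEntropy, sum_eq_sum_appendBit, ← Finset.sum_add_distrib,
    negMulLog_add_negMulLog windowFreq_nonneg windowFreq_nonneg, ← windowFreq_eq_add]

lemma windowEntropy_add_le_windowEntropy_succ (x : ℕ → Bool) (N k : ℕ) :
    windowEntropy x N k + 2 * Real.log 2 * errorRate x N k ≤ windowEntropy x N (k + 1) := by
  rw [windowEntropy_succ, errorRate_eq_sum_min]
  gcongr
  exact two_mul_log_two_mul_sum_min_le (fun _ => windowFreq_nonneg) fun _ => windowFreq_nonneg

lemma windowEntropy_succ_le (x : ℕ → Bool) (k : ℕ) (hN : N ≠ 0) :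
    windowEntropy x N (k + 1) ≤ windowEntropy x N k + Real.binEntropy (errorRate x N k) := by
  rw [windowEntropy_succ, errorRate_eq_sum_min]
  gcongr
  refine sum_mul_binEntropy_le_binEntropy_sum_min (fun _ => windowFreq_nonneg)
    (fun _ => windowFreq_nonneg) ?_
  simp only [← windowFreq_eq_add, sum_windowFreq hN]

lemma two_mul_log_two_mul_errorRate_le (x : ℕ → Bool) (N k : ℕ) :
    2 * Real.log 2 * k * errorRate x N k ≤
      windowEntropy x N k + 2 * Real.log 2 * k * k * (N : ℝ)⁻¹ := by
  have herror : ∀ j ∈ Finset.range k, errorRate x N k - k / N ≤ errorRate x N j := fun j hj => by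
    obtain ⟨m, rfl⟩ := Nat.exists_eq_add_of_le (Finset.mem_range.mp hj).le
    have hm : (m : ℝ) / N ≤ ((j + m : ℕ) : ℝ) / N := by gcongr; omega
    linarith [errorRate_add_le x N j m]
  have hsum : 2 * Real.log 2 * k * (errorRate x N k - k / N) ≤ windowEntropy x N k := by
    calc 2 * Real.log 2 * k * (errorRate x N k - k / N)
        = ∑ _j ∈ Finset.range k, 2 * Real.log 2 * (errorRate x N k - k / N) := by
          rw [Finset.sum_const, Finset.card_range, nsmul_eq_mul]; ring
      _ ≤ ∑ j ∈ Finset.range k, (windowEntropy x N (j + 1) - windowEntropy x N j) :=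
          Finset.sum_le_sum fun j hj => by
            have := mul_le_mul_of_nonneg_left (herror j hj) (by positivity : 0 ≤ 2 * Real.log 2)
            linarith [windowEntropy_add_le_windowEntropy_succ x N j]
      _ = windowEntropy x N k := by
          rw [Finset.sum_range_sub, windowEntropy_zero, sub_zero]
  rw [div_eq_mul_inv, mul_sub] at hsum
  linarith

end Window

section UpperLimits

/-- The upper limit of the optimal error rate with context length `k`; equals `γ̄_k(x)` by
`limsup_gammaWord`. -/
noncomputable def upperErrorRate (x : ℕ → Bool) (k : ℕ) : ℝ :=
  atTop.limsup fun N => errorRate x N k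

/-- The upper limit of the entropy, in nats, of the windows of length `k`; equals
`k * log 2 * h̄_k(x)` by `limsup_hBlock`. -/
noncomputable def upperWindowEntropy (x : ℕ → Bool) (k : ℕ) : ℝ :=
  atTop.limsup fun N => windowEntropy x N k

lemma gammaWord_add (k : ℕ) (x : ℕ → Bool) (N : ℕ) :
    gammaWord k x (N + k) = errorRate x N k := by
  have herrors (f : (Fin k → Bool) → Bool) :
      #{i ∈ Finset.Ico k (N + k) | x i ≠ f fun j => x (i - k + j)} = predErrors x N f := by
    have hshift : Finset.Ico k (N + k) = (Finset.range N).map (addRightEmbedding k) := by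
      rw [Finset.range_eq_Ico, Finset.map_add_right_Ico, zero_add]
    rw [hshift, Finset.filter_map, Finset.card_map]
    simp only [predErrors, Function.comp_def, addRightEmbedding_apply, Nat.add_sub_cancel]
    rfl
  have hlength : ((N + k : ℕ) : ℝ) - k = N := by push_cast; ring
  simp only [gammaWord, herrors, hlength, one_div_mul_eq_div, errorRate, minPredErrors,
    Nat.cast_finsetInf']

lemma occ_add (k : ℕ) (x : ℕ → Bool) (N : ℕ) (u : Fin k → Bool) :
    occ x (N + k) (List.ofFn u) = windowCount x (N + 1) u := by
  have hfactor (i : ℕ) : factor x i k = List.ofFn (window x k i) := rfl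
  have hlength : N + k + 1 - k = N + 1 := by omega
  simp only [occ, List.length_ofFn, hfactor, List.ofFn_injective.eq_iff, hlength, windowCount]

lemma hBlock_add (k : ℕ) (x : ℕ → Bool) (N : ℕ) :
    hBlock k x (N + k) = (k * Real.log 2)⁻¹ * windowEntropy x (N + 1) k := by
  have hlength : ((N + k : ℕ) : ℝ) - k + 1 = (N + 1 : ℕ) := by push_cast; ring
  simp only [hBlock, occ_add, hlength, windowEntropy, windowFreq, Real.negMulLog, Real.logb,
    Finset.mul_sum]
  refine Finset.sum_congr rfl fun u _ => ?_
  ring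

lemma limsup_gammaWord (x : ℕ → Bool) (k : ℕ) :
    (atTop.limsup fun n => gammaWord k x n) = upperErrorRate x k := by
  rw [← limsup_nat_add _ k]
  simp only [gammaWord_add, upperErrorRate]

lemma limsup_hBlock (x : ℕ → Bool) (k : ℕ) :
    (atTop.limsup fun n => hBlock k x n) = (k * Real.log 2)⁻¹ * upperWindowEntropy x k := by
  rw [← limsup_nat_add _ k, upperWindowEntropy, ← limsup_nat_add (windowEntropy x · k) 1]
  simp only [hBlock_add]
  exact limsup_const_mul_of_mem_Icc (by positivity) fun N => windowEntropy_mem_Icc x (N + 1) k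

lemma upperErrorRate_mem_Icc (x : ℕ → Bool) (k : ℕ) :
    upperErrorRate x k ∈ Set.Icc (0 : ℝ) 2⁻¹ :=
  limsup_mem_Icc fun N => errorRate_mem_Icc x N k

lemma upperWindowEntropy_zero (x : ℕ → Bool) : upperWindowEntropy x 0 = 0 := by
  simp only [upperWindowEntropy, windowEntropy_zero, limsup_const]

lemma inv_natCast_mem_Icc (N : ℕ) : (N : ℝ)⁻¹ ∈ Set.Icc (0 : ℝ) 1 :=
  ⟨by positivity, Nat.cast_inv_le_one N⟩

lemma limsup_inv_natCast : (atTop.limsup fun N : ℕ => (N : ℝ)⁻¹) = 0 :=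
  tendsto_inv_atTop_nhds_zero_nat.limsup_eq

lemma antitone_upperErrorRate (x : ℕ → Bool) : Antitone (upperErrorRate x) := by
  refine antitone_nat_of_succ_le fun k => ?_
  have hle := limsup_le_limsup_add_limsup (F := atTop) (fun N => errorRate_mem_Icc x N (k + 1))
    (fun N => errorRate_mem_Icc x N k) inv_natCast_mem_Icc
    (Eventually.of_forall fun N => by simpa using errorRate_add_le x N k 1)
  rwa [limsup_inv_natCast, add_zero] at hle

lemma tendsto_upperErrorRate (x : ℕ → Bool) :
    Tendsto (upperErrorRate x) atTop (𝓝 (gammaUp x)) := by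
  have hlim := tendsto_atTop_ciInf (antitone_upperErrorRate x)
    ⟨0, Set.forall_mem_range.mpr fun k => (upperErrorRate_mem_Icc x k).1⟩
  simp only [gammaUp, limsup_gammaWord]
  rwa [hlim.limsup_eq]

lemma gammaUp_nonneg (x : ℕ → Bool) : 0 ≤ gammaUp x :=
  ge_of_tendsto' (tendsto_upperErrorRate x) fun k => (upperErrorRate_mem_Icc x k).1

lemma upperWindowEntropy_succ_le (x : ℕ → Bool) (k : ℕ) :
    upperWindowEntropy x (k + 1) ≤
      upperWindowEntropy x k + Real.binEntropy (upperErrorRate x k) := by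
  have hmono : MonotoneOn Real.binEntropy (Set.Icc 0 2⁻¹) :=
    Real.binEntropy_strictMonoOn.monotoneOn
  rw [upperErrorRate, ← limsup_comp_of_monotoneOn_Icc hmono
    Real.binEntropy_continuous.continuousOn fun N => errorRate_mem_Icc x N k]
  refine limsup_le_limsup_add_limsup (fun N => windowEntropy_mem_Icc x N (k + 1))
    (fun N => windowEntropy_mem_Icc x N k)
    (fun N => ⟨Real.binEntropy_nonneg (errorRate_mem_Icc x N k).1
      ((errorRate_mem_Icc x N k).2.trans (by norm_num)), Real.binEntropy_le_log_two⟩) ?_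
  filter_upwards [eventually_ne_atTop 0] with N hN
  exact windowEntropy_succ_le x k hN

lemma upperWindowEntropy_le_sum (x : ℕ → Bool) (k : ℕ) :
    upperWindowEntropy x k ≤ ∑ j ∈ Finset.range k, Real.binEntropy (upperErrorRate x j) := by
  induction k with
  | zero => simp [upperWindowEntropy_zero]
  | succ k ih =>
    rw [Finset.sum_range_succ]
    linarith [upperWindowEntropy_succ_le x k]

lemma two_mul_log_two_mul_upperErrorRate_le (x : ℕ → Bool) (k : ℕ) :
    2 * Real.log 2 * k * upperErrorRate x k ≤ upperWindowEntropy x k := by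
  have hc : 0 ≤ 2 * Real.log 2 * k := by positivity
  have hck : 0 ≤ 2 * Real.log 2 * k * k := by positivity
  have hle := limsup_le_limsup_add_limsup (F := atTop)
    (fun N => const_mul_mem_Icc hc (errorRate_mem_Icc x N k))
    (fun N => windowEntropy_mem_Icc x N k)
    (fun N => const_mul_mem_Icc hck (inv_natCast_mem_Icc N))
    (Eventually.of_forall fun N => two_mul_log_two_mul_errorRate_le x N k)
  rwa [limsup_const_mul_of_mem_Icc hc fun N => errorRate_mem_Icc x N k,
    limsup_const_mul_of_mem_Icc hck inv_natCast_mem_Icc, limsup_inv_natCast, mul_zero,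
    add_zero] at hle

lemma limsup_hBlock_le_inv_mul_sum (x : ℕ → Bool) (k : ℕ) :
    (atTop.limsup fun n => hBlock k x n) ≤
      (k : ℝ)⁻¹ * ∑ j ∈ Finset.range k, binEntropy (upperErrorRate x j) := by
  simp only [limsup_hBlock, binEntropy_eq_real_binEntropy_div, ← Finset.sum_div]
  calc (k * Real.log 2)⁻¹ * upperWindowEntropy x k
      ≤ (k * Real.log 2)⁻¹ * ∑ j ∈ Finset.range k, Real.binEntropy (upperErrorRate x j) := by
        gcongr
        exact upperWindowEntropy_le_sum x k
    _ = (k : ℝ)⁻¹ * ((∑ j ∈ Finset.range k, Real.binEntropy (upperErrorRate x j)) /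
          Real.log 2) := by
        rw [mul_inv]; ring

lemma limsup_hBlock_mem_Icc (x : ℕ → Bool) (k : ℕ) :
    (atTop.limsup fun n => hBlock k x n) ∈ Set.Icc (0 : ℝ) 1 := by
  constructor
  · rw [limsup_hBlock]
    exact mul_nonneg (by positivity) (limsup_mem_Icc fun N => windowEntropy_mem_Icc x N k).1
  · have hbit (p : ℝ) : binEntropy p ≤ 1 := by
      rw [binEntropy_eq_real_binEntropy_div]
      exact div_le_one_of_le₀ Real.binEntropy_le_log_two (by positivity)
    calc (atTop.limsup fun n => hBlock k x n)
        ≤ (k : ℝ)⁻¹ * ∑ j ∈ Finset.range k, binEntropy (upperErrorRate x j) :=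
          limsup_hBlock_le_inv_mul_sum x k
      _ ≤ (k : ℝ)⁻¹ * ∑ _j ∈ Finset.range k, 1 := by
          gcongr
          exact hbit _
      _ ≤ 1 := by
          rw [Finset.sum_const, Finset.card_range, nsmul_eq_mul, mul_one]
          exact inv_mul_le_one

end UpperLimits

theorem two_mul_gammaUp_le_hUp (x : ℕ → Bool) : 2 * gammaUp x ≤ hUp x := by
  rw [← ((tendsto_upperErrorRate x).const_mul 2).limsup_eq, hUp]
  refine limsup_le_limsup ?_
    (isCoboundedUnder_le_of_mem_Icc fun k => const_mul_mem_Icc zero_le_two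
      (upperErrorRate_mem_Icc x k))
    (isBoundedUnder_le_of_mem_Icc (limsup_hBlock_mem_Icc x))
  filter_upwards [eventually_gt_atTop 0] with k hk
  rw [limsup_hBlock, le_inv_mul_iff₀ (by positivity)]
  linarith [two_mul_log_two_mul_upperErrorRate_le x k]

theorem hUp_le_binEntropy_gammaUp (x : ℕ → Bool) : hUp x ≤ binEntropy (gammaUp x) := by
  have hcont : Continuous binEntropy := by
    simp only [funext binEntropy_eq_real_binEntropy_div]
    exact Real.binEntropy_continuous.div_const _
  have hcesaro := ((hcont.tendsto _).comp (tendsto_upperErrorRate x)).cesaro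
  rw [← hcesaro.limsup_eq, hUp]
  exact limsup_le_limsup (Eventually.of_forall (limsup_hBlock_le_inv_mul_sum x))
    (isCoboundedUnder_le_of_mem_Icc (limsup_hBlock_mem_Icc x)) hcesaro.isBoundedUnder_le

theorem hUp_eq_zero_iff_gammaUp_eq_zero (x : ℕ → Bool) :
    hUp x = 0 ↔ gammaUp x = 0 := by
  have hlower := two_mul_gammaUp_le_hUp x
  have hupper := hUp_le_binEntropy_gammaUp x
  have hnonneg := gammaUp_nonneg x
  constructor
  · intro hzero
    linarith
  · intro hzero
    rw [hzero, binEntropy_eq_real_binEntropy_div, Real.binEntropy_zero, zero_div] at hupper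
    linarith
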